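/- arXiv:1710.04321 — 3 statements merged into one kernel-verified Lean document; each statement's English description precedes it below -/
import Mathlib

section
/- Let K be a field of characteristic different from 2, let λ ∈ K* be a nonsquare, and let a ∈ K*. Let f be a quadratic form on a 2-dimensional K-vector space V and suppose there are vectors u, v ∈ V with f(v) = a and f(u) = λ·a. Then u and v are linearly independent, and, writing x = b_f(u,v) for the value of the polar bilinear form, f is isometric to the diagonal form ⟨a, λa − x²/a⟩ and also to the diagonal form ⟨λa, a − x²/(λa)⟩ (in particular both second entries are nonzero); consequently λ·f is isometric to f. -/
/-!
Evaluating `f` on a relation `s • u + t • v = 0` gives `s ^ 2 * lam = t ^ 2`, so `s` and `t` vanish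
because `lam` is not a square; hence `u, v` is a basis of `V`. The two second diagonal entries are
nonzero for the same reason: if one of them vanished, `(x / a) ^ 2` would be `lam`.

The diagonalisations come from one Gram-Schmidt step (`equivalent_diagonal`), applied once to
`v, u` and once to `u, v`. For `lam • f ≅ f`, the linear map with `u ↦ lam • v` and `v ↦ u` is
bijective and multiplies `f` by `lam`. Each isometry is obtained from `equivalent_of_pair`: a
quadratic form on a plane is determined by its values and its polar form on a basis.
-/

theorem map_smul_add_smul {K V : Type*} [Field K] [AddCommGroup V] [Module K V]
    (f : QuadraticForm K V) (p q : K) (u v : V) :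
    f (p • u + q • v) = p ^ 2 * f u + q ^ 2 * f v + p * q * QuadraticMap.polar f u v := by
  rw [QuadraticMap.map_add f, QuadraticMap.map_smul, QuadraticMap.map_smul,
    QuadraticMap.polar_smul_left, QuadraticMap.polar_smul_right]
  simp only [smul_eq_mul]
  ring

/-- Quadratic forms on two planes are isometric as soon as they have the same Gram matrix
with respect to some linearly independent pairs. -/
theorem equivalent_of_pair {K V W : Type*} [Field K] [AddCommGroup V] [Module K V]
    [AddCommGroup W] [Module K W] (hV : Module.finrank K V = 2) (hW : Module.finrank K W = 2)
    (f : QuadraticForm K V) (g : QuadraticForm K W) (u v : V) (u' v' : W)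
    (h : LinearIndependent K ![u, v]) (h' : LinearIndependent K ![u', v'])
    (hu : f u = g u') (hv : f v = g v')
    (huv : QuadraticMap.polar f u v = QuadraticMap.polar g u' v') :
    QuadraticMap.Equivalent f g := by
  let b := basisOfLinearIndependentOfCardEqFinrank h (by simp [hV])
  let b' := basisOfLinearIndependentOfCardEqFinrank h' (by simp [hW])
  have hb : ⇑b = ![u, v] := coe_basisOfLinearIndependentOfCardEqFinrank _ _
  have hb' : ⇑b' = ![u', v'] := coe_basisOfLinearIndependentOfCardEqFinrank _ _
  let e := b.equiv b' (Equiv.refl _)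
  have eu : e u = u' := by
    have := b.equiv_apply 0 b' (Equiv.refl _)
    simpa [hb, hb'] using this
  have ev : e v = v' := by
    have := b.equiv_apply 1 b' (Equiv.refl _)
    simpa [hb, hb'] using this
  refine ⟨⟨e, fun w => ?_⟩⟩
  have hw := b.sum_repr w
  rw [Fin.sum_univ_two, hb] at hw
  simp only [Matrix.cons_val_zero, Matrix.cons_val_one] at hw
  change g (e w) = f w
  rw [← hw, map_add, map_smul, map_smul, eu, ev, map_smul_add_smul, map_smul_add_smul, hu, hv, huv]

/-- One Gram-Schmidt step: `v` and `u - (x / f v) • v` form an orthogonal basis. -/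
theorem equivalent_diagonal {K V : Type*} [Field K] (hchar : (2 : K) ≠ 0)
    [AddCommGroup V] [Module K V] (hV : Module.finrank K V = 2)
    (f : QuadraticForm K V) (u v : V) (h : LinearIndependent K ![u, v]) (hv : f v ≠ 0)
    (x : K) (hx : x = QuadraticMap.polar f u v / 2) :
    QuadraticMap.Equivalent f
      (QuadraticMap.weightedSumSquares K ![f v, f u - x ^ 2 / f v]) := by
  have hp : QuadraticMap.polar f u v = 2 * x := by rw [hx]; field_simp
  have hself : QuadraticMap.polar f v v = 2 * f v := by
    rw [QuadraticMap.polar_self]; simp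
  have hw : u - (x / f v) • v = (1 : K) • u + (-(x / f v)) • v := by module
  refine equivalent_of_pair hV (by simp) f _ v (u - (x / f v) • v) ![1, 0] ![0, 1] ?_ ?_ ?_ ?_ ?_
  · rw [LinearIndependent.pair_iff] at h ⊢
    intro s t hst
    have hst' : t • u + (s - t * (x / f v)) • v = 0 := by
      rw [← hst]; module
    obtain ⟨rfl, h2⟩ := h _ _ hst'
    exact ⟨by simpa using h2, rfl⟩
  · rw [LinearIndependent.pair_iff]
    intro s t hst
    exact ⟨by simpa using congrFun hst 0, by simpa using congrFun hst 1⟩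
  · simp [QuadraticMap.weightedSumSquares_apply]
  · rw [hw, map_smul_add_smul, hp]
    simp only [QuadraticMap.weightedSumSquares_apply, Fin.sum_univ_two]
    simp
    field_simp
    ring
  · rw [QuadraticMap.polar_sub_right, QuadraticMap.polar_smul_right, hself,
      QuadraticMap.polar_comm, hp]
    simp [QuadraticMap.polar, QuadraticMap.weightedSumSquares_apply, Fin.sum_univ_two]
    field_simp
    ring

/-- Let K be a field of characteristic different from 2, let λ ∈ K* be a
nonsquare, and let a ∈ K*. Let f be a quadratic form on a 2-dimensional K-vector space V
and suppose there are vectors u, v ∈ V with f(v) = a and f(u) = λ·a. Then u and v are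
linearly independent, and, writing x = b_f(u,v) for the value of the polar bilinear form
(normalized so that b_f(w,w) = f(w)), f is isometric to ⟨a, λa − x²/a⟩ and also to
⟨λa, a − x²/(λa)⟩ (in particular both second entries are nonzero); consequently
λ·f is isometric to f. -/
theorem stmt0 {K V : Type*} [Field K] (hchar : (2 : K) ≠ 0)
    [AddCommGroup V] [Module K V] (hV : Module.finrank K V = 2)
    (lam a : K) (hlam : lam ≠ 0) (ha : a ≠ 0) (hns : ∀ y : K, y ^ 2 ≠ lam)
    (f : QuadraticForm K V) (u v : V) (hfv : f v = a) (hfu : f u = lam * a)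
    (x : K) (hx : x = QuadraticMap.polar f u v / 2) :
    LinearIndependent K ![u, v] ∧
    lam * a - x ^ 2 / a ≠ 0 ∧
    a - x ^ 2 / (lam * a) ≠ 0 ∧
    QuadraticMap.Equivalent f
      (QuadraticMap.weightedSumSquares K ![a, lam * a - x ^ 2 / a]) ∧
    QuadraticMap.Equivalent f
      (QuadraticMap.weightedSumSquares K ![lam * a, a - x ^ 2 / (lam * a)]) ∧
    QuadraticMap.Equivalent (lam • f) f := by
  have hind : LinearIndependent K ![u, v] := by
    rw [LinearIndependent.pair_iff]
    intro s t hst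
    have h1 : f (s • u) = f (t • v) := by
      rw [eq_neg_of_add_eq_zero_left hst, QuadraticMap.map_neg]
    rw [QuadraticMap.map_smul, QuadraticMap.map_smul, hfu, hfv, smul_eq_mul, smul_eq_mul] at h1
    have h2 : s * s * lam = t * t := by
      apply mul_right_cancel₀ ha
      linear_combination h1
    have hs : s = 0 := by
      by_contra hs
      apply hns (t / s)
      field_simp
      linear_combination -h2
    subst hs
    exact ⟨rfl, by simpa using h2.symm⟩
  have hind' : LinearIndependent K ![v, u] := by
    rw [LinearIndependent.pair_iff] at hind ⊢
    intro s t hst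
    exact (hind t s (by rw [add_comm]; exact hst)).symm
  have hla : lam * a ≠ 0 := mul_ne_zero hlam ha
  have hx2 : x ^ 2 ≠ lam * a ^ 2 := by
    intro h
    apply hns (x / a)
    field_simp
    linear_combination h
  refine ⟨hind, ?_, ?_, ?_, ?_, ?_⟩
  · intro h
    field_simp at h
    exact hx2 (by linear_combination -h)
  · intro h
    field_simp at h
    exact hx2 (by linear_combination -h)
  · have := equivalent_diagonal hchar hV f u v hind (by rwa [hfv]) x hx
    rwa [hfu, hfv] at this
  · have := equivalent_diagonal hchar hV f v u hind' (by rwa [hfu]) x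
      (by rw [hx, QuadraticMap.polar_comm])
    rwa [hfu, hfv] at this
  · refine equivalent_of_pair hV hV (lam • f) f u v (lam • v) u hind ?_ ?_ ?_ ?_
    · rw [LinearIndependent.pair_iff] at hind' ⊢
      intro s t hst
      obtain ⟨h1, h2⟩ := hind' (s * lam) t (by rw [mul_smul]; exact hst)
      exact ⟨(mul_eq_zero.mp h1).resolve_right hlam, h2⟩
    · rw [QuadraticMap.map_smul, smul_apply, hfu, hfv]
      simp only [smul_eq_mul]
      ring
    · rw [smul_apply, hfu, hfv, smul_eq_mul]
    · rw [QuadraticMap.polar_smul_left, QuadraticMap.polar_comm f v u, FunLike.coe_smul,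
        QuadraticMap.polar_smul]
end

section
/- Let K be a field of characteristic different from 2, let Q be an anisotropic quadratic form on a finite-dimensional K-vector space, let λ ∈ K* be a nonsquare, and suppose Q represents both a and λa for some a ∈ K*. Then Q is isometric to f ⊥ g, where f is a 2-dimensional quadratic form over K that represents both a and λa and satisfies λ·f ≅ f, and g is a quadratic form over K of dimension (dim Q) − 2. -/
/-!
Choose `v`, `w` with `Q v = a` and `Q w = lam * a`. They are linearly independent because `lam` is
not a square, and in the basis `(v, w)` of the plane they span, the form reads
`f (x, y) = a x² + b x y + lam a y²`. The substitution `(x, y) ↦ (lam y, x)` multiplies this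
expression by `lam`, so `lam • f ≅ f`. Since `Q` is anisotropic and `2 ≠ 0`, the plane meets its
orthogonal complement trivially, hence it splits off as an orthogonal summand
(`exists_equivalent_prod_of_injective`).
-/

/-- An anisotropic form in characteristic not 2 splits off any subspace as an orthogonal summand.
The subspace is given as the image of an injective map from the coordinate space `Kᵐ`. -/
theorem exists_equivalent_prod_of_injective {K V : Type*} [Field K] (hchar : (2 : K) ≠ 0)
    [AddCommGroup V] [Module K V] [FiniteDimensional K V]
    (Q : QuadraticForm K V) (hQ : Q.Anisotropic) {m : ℕ}
    (T : (Fin m → K) →ₗ[K] V) (hT : Function.Injective T) :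
    ∃ g : QuadraticForm K (Fin (Module.finrank K V - m) → K),
      QuadraticMap.Equivalent Q ((Q.comp T).prod g) := by
  let B : LinearMap.BilinForm K V := Q.polarBilin
  have hrefl : B.IsRefl := by
    intro x y h
    have h' : QuadraticMap.polar Q x y = 0 := h
    change QuadraticMap.polar Q y x = 0
    rwa [QuadraticMap.polar_comm]
  have hcompl : IsCompl (LinearMap.range T) (B.orthogonal (LinearMap.range T)) := by
    rw [LinearMap.BilinForm.isCompl_orthogonal_iff_disjoint hrefl, Submodule.disjoint_def]
    intro x hx hx'
    have h : QuadraticMap.polar Q x x = 0 := hx' x hx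
    rw [QuadraticMap.polar_self, nsmul_eq_mul] at h
    exact hQ x ((mul_eq_zero.mp h).resolve_left (by exact_mod_cast hchar))
  have hrange : Module.finrank K (LinearMap.range T) = m := by
    rw [LinearMap.finrank_range_of_inj hT, Module.finrank_fin_fun]
  have hdim := Submodule.finrank_add_eq_of_isCompl hcompl
  let e : (Fin (Module.finrank K V - m) → K) ≃ₗ[K] B.orthogonal (LinearMap.range T) :=
    LinearEquiv.ofFinrankEq _ _ (by rw [Module.finrank_fin_fun]; omega)
  let E := ((LinearEquiv.ofInjective T hT).prodCongr e).trans
    (Submodule.prodEquivOfIsCompl _ _ hcompl)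
  refine ⟨Q.comp ((Submodule.subtype _).comp e.toLinearMap), ⟨QuadraticMap.IsometryEquiv.symm
    { E with map_app' := ?_ }⟩⟩
  rintro ⟨x, y⟩
  have hE : E (x, y) = T x + (e y : V) := by simp [E]
  have hortho : QuadraticMap.polar Q (T x) (e y : V) = 0 := (e y).2 (T x) ⟨x, rfl⟩
  change Q (E (x, y)) = Q (T x) + Q (e y : V)
  rw [hE, QuadraticMap.map_add Q, hortho, add_zero]

/-- Let K be a field of characteristic different from 2, let Q be an
anisotropic quadratic form on a finite-dimensional K-vector space, let λ ∈ K* be a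
nonsquare, and suppose Q represents both a and λa for some a ∈ K*. Then Q is isometric
to f ⊥ g, where f is a 2-dimensional quadratic form over K that represents both a and λa
and satisfies λ·f ≅ f, and g is a quadratic form over K of dimension (dim Q) − 2. -/
theorem stmt1 {K V : Type*} [Field K] (hchar : (2 : K) ≠ 0)
    [AddCommGroup V] [Module K V] [FiniteDimensional K V]
    (Q : QuadraticForm K V) (hQ : Q.Anisotropic)
    (lam a : K) (hlam : lam ≠ 0) (ha : a ≠ 0) (hns : ∀ y : K, y ^ 2 ≠ lam)
    (hra : ∃ w : V, Q w = a) (hrla : ∃ w : V, Q w = lam * a) :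
    ∃ (f : QuadraticForm K (Fin 2 → K))
      (g : QuadraticForm K (Fin (Module.finrank K V - 2) → K)),
      QuadraticMap.Equivalent Q (f.prod g) ∧
      (∃ w, f w = a) ∧ (∃ w, f w = lam * a) ∧
      QuadraticMap.Equivalent (lam • f) f := by
  obtain ⟨v, hv⟩ := hra
  obtain ⟨w, hw⟩ := hrla
  have hv0 : v ≠ 0 := by
    rintro rfl
    exact ha (by simpa using hv.symm)
  let T : (Fin 2 → K) →ₗ[K] V :=
    (LinearMap.proj 0).smulRight v + (LinearMap.proj 1).smulRight w
  have hTapp (x : Fin 2 → K) : T x = x 0 • v + x 1 • w := rfl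
  have hT : Function.Injective T := by
    rw [← LinearMap.ker_eq_bot, LinearMap.ker_eq_bot']
    intro x hx
    rw [hTapp] at hx
    have h1 : x 1 = 0 := by
      by_contra h1
      -- A relation with `x 1 ≠ 0` makes `w` a multiple of `v`, so that `lam` is a square.
      have hx' : x 1 • w = (-x 0) • v := by
        rw [neg_smul]
        exact eq_neg_of_add_eq_zero_right hx
      have h2 := congrArg Q hx'
      rw [QuadraticMap.map_smul, QuadraticMap.map_smul, hv, hw, smul_eq_mul, smul_eq_mul] at h2
      apply hns (x 0 / x 1)
      rw [div_pow, div_eq_iff (pow_ne_zero 2 h1)]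
      apply mul_right_cancel₀ ha
      linear_combination -h2
    have h0 : x 0 = 0 := by simpa [h1, hv0] using hx
    ext i
    fin_cases i
    · exact h0
    · exact h1
  have hf (x : Fin 2 → K) : Q.comp T x =
      a * x 0 ^ 2 + QuadraticMap.polar Q v w * (x 0 * x 1) + lam * a * x 1 ^ 2 := by
    rw [QuadraticMap.comp_apply, hTapp, QuadraticMap.map_add Q, QuadraticMap.map_smul,
      QuadraticMap.map_smul, QuadraticMap.polar_smul_left, QuadraticMap.polar_smul_right, hv, hw]
    simp only [smul_eq_mul]
    ring
  obtain ⟨g, hg⟩ := exists_equivalent_prod_of_injective hchar Q hQ T hT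
  refine ⟨Q.comp T, g, hg, ⟨![1, 0], ?_⟩, ⟨![0, 1], ?_⟩, ⟨?_⟩⟩
  · simp [hf]
  · simp [hf]
  · exact
      { toFun := fun x => ![lam * x 1, x 0]
        invFun := fun x => ![x 1, lam⁻¹ * x 0]
        map_add' := fun x y => by
          ext i
          fin_cases i <;> simp [mul_add]
        map_smul' := fun c x => by
          ext i
          fin_cases i <;> simp [mul_left_comm]
        left_inv := fun x => by
          ext i
          fin_cases i <;> simp [hlam]
        right_inv := fun x => by
          ext i
          fin_cases i <;> simp [hlam]
        map_app' := fun x => by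
          change Q.comp T ![lam * x 1, x 0] = lam * Q.comp T x
          rw [hf, hf]
          simp only [Matrix.cons_val_zero, Matrix.cons_val_one]
          ring }
end

section
/- Let K be a field of characteristic different from 2 and let q and p be nondegenerate quadratic forms over K with dim q > dim p and dim q ≥ 1. If λ ∈ K* is a similarity factor of q ⊥ p, then the quadratic form q ⊥ (−λ)·q is isotropic over K. -/
/-!
Write the similitude as a linear bijection `f` of `V × W` with `Q (f x) = lam * Q x`, where
`Q = q ⊥ p`. Since `dim W < dim V`, the `W`-component of `f` restricted to `V` has a nonzero kernel
vector `v`, so `f (v, 0) = (v', 0)`. Comparing values of `Q` gives `q v' = lam * q v`, and `(v', v)`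
is an isotropic vector of `q ⊥ (-lam) • q`.
-/

/-- Let K be a field of characteristic different from 2 and let q and p be
nondegenerate quadratic forms over K with dim q > dim p and dim q ≥ 1. If λ ∈ K* is a
similarity factor of q ⊥ p, then the quadratic form q ⊥ (−λ)·q is isotropic over K. -/
theorem stmt2 {K V W : Type*} [Field K] (hchar : (2 : K) ≠ 0)
    [AddCommGroup V] [Module K V] [FiniteDimensional K V]
    [AddCommGroup W] [Module K W] [FiniteDimensional K W]
    (q : QuadraticForm K V) (p : QuadraticForm K W)
    (hq : LinearMap.BilinForm.Nondegenerate (QuadraticMap.polarBilin q))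
    (hp : LinearMap.BilinForm.Nondegenerate (QuadraticMap.polarBilin p))
    (hdim : Module.finrank K W < Module.finrank K V)
    (hdim1 : 1 ≤ Module.finrank K V)
    (lam : K) (hlam : lam ≠ 0)
    (hsim : QuadraticMap.Equivalent (lam • q.prod p) (q.prod p)) :
    ∃ z : V × V, z ≠ 0 ∧ (q.prod ((-lam) • q)) z = 0 := by
  obtain ⟨f⟩ := hsim
  obtain ⟨v, hv, hv0⟩ := Submodule.exists_mem_ne_zero_of_ne_bot
    (LinearMap.ker_ne_bot_of_finrank_lt
      (f := LinearMap.snd K V W ∘ₗ f.toLinearEquiv.toLinearMap ∘ₗ LinearMap.inl K V W) hdim)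
  have h2 : (f (v, 0)).2 = 0 := hv
  have h := f.map_app (v, 0)
  simp only [QuadraticMap.prod_apply, QuadraticMap.smul_apply, h2, map_zero, add_zero,
    smul_eq_mul] at h
  refine ⟨((f (v, 0)).1, v), fun hz => hv0 (congrArg Prod.snd hz), ?_⟩
  simp only [QuadraticMap.prod_apply, QuadraticMap.smul_apply, smul_eq_mul, h]
  ring
end
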